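/- Let F ⊆ X^ω be such that F contains every ultimately periodic ω-word and every ω-word in F is non-disjunctive (i.e., Ult ⊆ F ⊆ R₀ = ⋃_{w∈X*}(X^ω \ X*·w·X^ω)). Then F does not have the Automatic Baire property. -/

import Mathlib

open Set MeasureTheory Computability

namespace AutoBaire

/-- The Cantor topology on the space of ω-words over `X`:
the product of the discrete topology on `X`. -/
def cantorTop (X : Type) : TopologicalSpace (ℕ → X) :=
  @Pi.topologicalSpace ℕ (fun _ => X) (fun _ => ⊥)

/-- The Borel σ-algebra of the Cantor space. -/
def cantorBorel (X : Type) : MeasurableSpace (ℕ → X) :=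
  @borel (ℕ → X) (cantorTop X)

variable {X : Type}

/-- Concatenation `w·ξ` of a finite word with an ω-word. -/
def wcat (w : List X) (ξ : ℕ → X) : ℕ → X :=
  Stream'.appendStream' w ξ

/-- The ball (cylinder) `w·X^ω`. -/
def cyl (w : List X) : Set (ℕ → X) := {ξ | ∃ η : ℕ → X, ξ = wcat w η}

/-- The ω-language `W·A` for a language `W` and an ω-language `A`. -/
def catOmega (W : Language X) (A : Set (ℕ → X)) : Set (ℕ → X) :=
  {ξ | ∃ w ∈ W, ∃ η ∈ A, ξ = wcat w η}

/-- `V^ω`: the set of ω-words that are infinite concatenations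
`v₁·v₂·⋯` of non-empty words `vᵢ ∈ V`. -/
def omegaPow (V : Language X) : Set (ℕ → X) :=
  {ξ | ∃ f : ℕ → List X, (∀ i, f i ∈ V ∧ f i ≠ []) ∧
    ∀ k, ξ ∈ cyl (((List.range k).map f).flatten)}

/-- Regular languages: those obtained from finite languages via the operations
union, concatenation and star. -/
inductive IsRegLang : Language X → Prop
  | finite (W : Language X) : (W : Set (List X)).Finite → IsRegLang W
  | union (W V : Language X) : IsRegLang W → IsRegLang V → IsRegLang (W + V)
  | concat (W V : Language X) : IsRegLang W → IsRegLang V → IsRegLang (W * V)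
  | star (W : Language X) : IsRegLang W → IsRegLang (W∗)

/-- Regular ω-languages: finite unions `⋃ᵢ Wᵢ·Vᵢ^ω` with `Wᵢ, Vᵢ` regular. -/
def IsRegOmega (F : Set (ℕ → X)) : Prop :=
  ∃ (n : ℕ) (W V : Fin n → Language X),
    (∀ i, IsRegLang (W i) ∧ IsRegLang (V i)) ∧
    F = ⋃ i, catOmega (W i) (omegaPow (V i))

/-- `X*·w·X^ω`: the set of ω-words containing `w` as an infix. -/
def infixOcc (w : List X) : Set (ℕ → X) :=
  {ξ | ∃ u : List X, ξ ∈ cyl (u ++ w)}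

/-- An ω-word is disjunctive if every finite word occurs in it as an infix. -/
def Disjunctive (ξ : ℕ → X) : Prop := ∀ w : List X, ξ ∈ infixOcc w

/-- Ultimately periodic ω-words: `ξ = w·v·v·v·⋯` with `v ≠ e`. -/
def UltPeriodic (ξ : ℕ → X) : Prop :=
  ∃ (w v : List X) (h : v ≠ []), ξ = wcat w (Stream'.cycle v h)

/-- The Automatic Baire property: `F Δ E ⊆ F'` for some regular open
ω-language `E` and some regular ω-language `F'` of first Baire category. -/
def HasABP (F : Set (ℕ → X)) : Prop :=
  ∃ E F' : Set (ℕ → X),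
    IsRegOmega E ∧ @IsOpen _ (cantorTop X) E ∧
    IsRegOmega F' ∧ @IsMeagre _ (cantorTop X) F' ∧
    symmDiff F E ⊆ F'

/-- The measure is finite and non-null: `0 < μ(X^ω) < ∞`. -/
def FiniteNonNull (μ : @MeasureTheory.Measure (ℕ → X) (cantorBorel X)) : Prop :=
  0 < μ Set.univ ∧ μ Set.univ < ⊤

/-- `supp(μ) = X^ω`: every non-empty open set has positive measure. -/
def FullSupport (μ : @MeasureTheory.Measure (ℕ → X) (cantorBorel X)) : Prop :=
  ∀ U : Set (ℕ → X), @IsOpen _ (cantorTop X) U → U.Nonempty → 0 < μ U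

/-- The balance condition: there is `c > 0` such that for all `w ∈ X*`, `x ∈ X`
either `μ(wx·X^ω) = 0` or `c·μ(w·X^ω) ≤ μ(wx·X^ω)`. -/
def Balanced (μ : @MeasureTheory.Measure (ℕ → X) (cantorBorel X)) : Prop :=
  ∃ c : ENNReal, 0 < c ∧ ∀ (w : List X) (x : X),
    μ (cyl (w ++ [x])) = 0 ∨ c * μ (cyl w) ≤ μ (cyl (w ++ [x]))


theorem wcat_nil (ξ : ℕ → X) : wcat [] ξ = ξ := rfl

theorem wcat_append (x y : List X) (ξ : ℕ → X) : wcat (x ++ y) ξ = wcat x (wcat y ξ) :=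
  Stream'.append_append_stream x y ξ

theorem wcat_inj (x : List X) {ξ η : ℕ → X} (h : wcat x ξ = wcat x η) : ξ = η :=
  Stream'.append_right_injective (x := x) (a := ξ) (b := η) h

theorem wcat_cancel (x y : List X) (ξ η : ℕ → X) (h : wcat x ξ = wcat y η)
    (hl : x.length ≤ y.length) : ∃ z, y = x ++ z ∧ ξ = wcat z η := by
  induction x generalizing y with
  | nil => exact ⟨y, rfl, h⟩
  | cons a x ih =>
    cases y with
    | nil => simp at hl
    | cons b y =>
      have h0 : a = b := congrFun h 0
      have h1 : wcat x ξ = wcat y η := funext fun n => congrFun h (n + 1)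
      obtain ⟨z, hz, hz'⟩ := ih y h1 (by simpa using hl)
      exact ⟨z, by simp [h0, hz], hz'⟩

def wtail (k : ℕ) (ξ : ℕ → X) : ℕ → X := Stream'.drop k ξ

def wseg (ξ : ℕ → X) (m n : ℕ) : List X := Stream'.take (n - m) (wtail m ξ)

theorem wseg_length (ξ : ℕ → X) (m n : ℕ) : (wseg ξ m n).length = n - m :=
  Stream'.length_take _ _

theorem wseg_cat (ξ : ℕ → X) {m n : ℕ} (h : m ≤ n) :
    wtail m ξ = wcat (wseg ξ m n) (wtail n ξ) := by
  have h1 := Stream'.append_take_drop (n - m) (wtail m ξ)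
  have h2 : Stream'.drop (n - m) (wtail m ξ) = wtail n ξ := by
    funext i
    change ξ (i + (n - m) + m) = ξ (i + n)
    congr 1; omega
  rw [h2] at h1
  exact h1.symm

theorem wtail_zero (ξ : ℕ → X) : wtail 0 ξ = ξ := rfl

theorem wseg_append (ξ : ℕ → X) {m n k : ℕ} (h : m ≤ n) (h' : n ≤ k) :
    wseg ξ m k = wseg ξ m n ++ wseg ξ n k := by
  have h1 := wseg_cat ξ (h.trans h')
  rw [wseg_cat ξ h, wseg_cat ξ h', ← wcat_append] at h1
  exact (Stream'.append_left_injective _ _ _ _ h1 (by simp [wseg_length]; omega)).symm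

/-- coinduction for `V^ω` -/
theorem omegaPow_coind (V : Language X) (S : Set (ℕ → X))
    (hS : ∀ η ∈ S, ∃ v ∈ V, v ≠ [] ∧ ∃ η' ∈ S, η = wcat v η') : S ⊆ omegaPow V := by
  intro η hη
  choose! v hv hv0 t ht he using hS
  let s : ℕ → (ℕ → X) := fun k => t^[k] η
  have hs : ∀ k, s k ∈ S := by
    intro k
    induction k with
    | zero => exact hη
    | succ k ih => 
      simp only [s, Function.iterate_succ_apply'] at ih ⊢
      exact ht _ ih
  refine ⟨fun k => v (s k), fun i => ⟨hv _ (hs i), hv0 _ (hs i)⟩, fun k => ⟨s k, ?_⟩⟩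
  induction k with
  | zero => rfl
  | succ k ih =>
    rw [List.range_succ, List.map_append, List.flatten_append, wcat_append]
    have : s (k+1) = t (s k) := by simp only [s, Function.iterate_succ_apply']
    rw [this]
    simp only [List.map_cons, List.map_nil, List.flatten_cons, List.flatten_nil, List.append_nil]
    rw [← he _ (hs k)]
    exact ih

theorem omegaPow_unfold (V : Language X) (η : ℕ → X) (h : η ∈ omegaPow V) :
    ∃ v ∈ V, v ≠ [] ∧ ∃ η' ∈ omegaPow V, η = wcat v η' := by
  obtain ⟨f, hf, h⟩ := h
  obtain ⟨η', h1⟩ := h 1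
  simp at h1
  refine ⟨f 0, (hf 0).1, (hf 0).2, η', ⟨fun i => f (i+1), fun i => hf _, fun k => ?_⟩, h1⟩
  obtain ⟨θ, h2⟩ := h (k+1)
  refine ⟨θ, ?_⟩
  rw [List.range_succ_eq_map, List.map_cons, List.flatten_cons, wcat_append, h1] at h2
  have := wcat_inj _ h2
  rw [this, List.map_map]; rfl

theorem omegaPow_long (V : Language X) (n : ℕ) (η : ℕ → X) (h : η ∈ omegaPow V) :
    ∃ x ∈ V∗, n ≤ x.length ∧ ∃ η' ∈ omegaPow V, η = wcat x η' := by
  induction n with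
  | zero => exact ⟨[], Language.nil_mem_kstar V, le_rfl, η, h, rfl⟩
  | succ n ih =>
    obtain ⟨x, hx, hn, η', h', rfl⟩ := ih
    obtain ⟨v, hv, hv0, η'', h'', rfl⟩ := omegaPow_unfold V η' h'
    refine ⟨x ++ v, ?_, ?_, η'', h'', (wcat_append _ _ _).symm⟩
    · obtain ⟨l, rfl, hl⟩ := Language.mem_kstar.1 hx
      refine Language.mem_kstar.2 ⟨l ++ [v], by simp, ?_⟩
      intro y hy
      simp at hy
      rcases hy with hy | rfl
      · exact hl _ hy
      · exact hv
    · have := List.length_pos_iff.2 hv0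
      simp; omega

def FQ (L : Language X) : Prop := (Set.range L.leftQuotient).Finite

theorem FQ_finite (L : Language X) (h : (L : Set (List X)).Finite) : FQ L := by
  have h1 : (⋃ l ∈ (L : Set (List X)), {y : List X | y ∈ l.tails}).Finite :=
    h.biUnion fun l _ => List.finite_toSet _
  refine (h1.finite_subsets).subset ?_
  rintro _ ⟨x, rfl⟩ y hy
  simp only [Set.mem_iUnion]
  exact ⟨x ++ y, hy, by simp⟩

theorem FQ_add (W V : Language X) (hW : FQ W) (hV : FQ V) : FQ (W + V) := by
  refine ((hW.prod hV).image fun p : Language X × Language X => p.1 + p.2).subset ?_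
  rintro _ ⟨x, rfl⟩
  exact ⟨(W.leftQuotient x, V.leftQuotient x), ⟨⟨x, rfl⟩, ⟨x, rfl⟩⟩, rfl⟩

theorem FQ_mul (W V : Language X) (hW : FQ W) (hV : FQ V) : FQ (W * V) := by
  refine ((hW.prod hV.finite_subsets).image
    fun p : Language X × Set (Language X) => ({y | y ∈ p.1 * V ∨ ∃ Q ∈ p.2, y ∈ Q} : Language X)).subset ?_
  rintro _ ⟨x, rfl⟩
  refine ⟨(W.leftQuotient x, {Q | ∃ x1 x2, x = x1 ++ x2 ∧ x1 ∈ W ∧ Q = V.leftQuotient x2}),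
    ⟨⟨x, rfl⟩, ?_⟩, ?_⟩
  · rintro _ ⟨x1, x2, -, -, rfl⟩
    exact ⟨x2, rfl⟩
  · refine Set.ext fun y => ?_
    change (y ∈ W.leftQuotient x * V ∨ ∃ Q, (∃ x1 x2, x = x1 ++ x2 ∧ x1 ∈ W ∧ Q = V.leftQuotient x2) ∧ y ∈ Q) ↔ x ++ y ∈ W * V
    constructor
    · rintro (h | ⟨_, ⟨x1, x2, rfl, h1, rfl⟩, h2⟩)
      · obtain ⟨a, ha, b, hb, rfl⟩ := Language.mem_mul.1 h
        exact Language.mem_mul.2 ⟨x ++ a, ha, b, hb, by simp⟩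
      · exact Language.mem_mul.2 ⟨x1, h1, x2 ++ y, h2, by simp⟩
    · intro h
      obtain ⟨a, ha, b, hb, hab⟩ := Language.mem_mul.1 h
      rcases List.append_eq_append_iff.1 hab with ⟨c, rfl, rfl⟩ | ⟨c, rfl, rfl⟩
      · exact Or.inr ⟨_, ⟨a, c, rfl, ha, rfl⟩, hb⟩
      · exact Or.inl (Language.mem_mul.2 ⟨c, ha, b, hb, rfl⟩)

theorem kstar_append {L : Language X} {x y : List X} (hx : x ∈ L∗) (hy : y ∈ L∗) : x ++ y ∈ L∗ := by
  obtain ⟨l, rfl, hl⟩ := Language.mem_kstar.1 hx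
  obtain ⟨m, rfl, hm⟩ := Language.mem_kstar.1 hy
  refine Language.mem_kstar.2 ⟨l ++ m, by simp, ?_⟩
  intro y hy
  rcases List.mem_append.1 hy with h | h
  · exact hl _ h
  · exact hm _ h

theorem kstar_single {L : Language X} {x : List X} (hx : x ∈ L) : x ∈ L∗ :=
  Language.mem_kstar.2 ⟨[x], by simp, by simpa using hx⟩

theorem kstar_split (L : Language X) (l : List (List X)) (hl : ∀ a ∈ l, a ∈ L) (x y : List X)
    (hx : x ≠ []) (h : x ++ y = l.flatten) :
    ∃ x1 x2 z y', x = x1 ++ x2 ∧ x1 ∈ L∗ ∧ y = z ++ y' ∧ x2 ++ z ∈ L ∧ y' ∈ L∗ := by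
  induction l generalizing x with
  | nil => simp at h; exact absurd h.1 hx
  | cons a l ih =>
    have ha : a ∈ L := hl a (by simp)
    have hl' : ∀ b ∈ l, b ∈ L := fun b hb => hl b (by simp [hb])
    have hf : l.flatten ∈ L∗ := Language.mem_kstar.2 ⟨l, rfl, hl'⟩
    rw [List.flatten_cons] at h
    rcases List.append_eq_append_iff.1 h with ⟨c, h1, h2⟩ | ⟨c, h1, h2⟩
    · exact ⟨[], x, c, l.flatten, rfl, Language.nil_mem_kstar L, h2, h1 ▸ ha, hf⟩
    · rcases eq_or_ne c [] with rfl | hc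
      · refine ⟨[], x, [], y, rfl, Language.nil_mem_kstar L, rfl, by simpa [h1] using ha, ?_⟩
        simpa [h2] using hf
      · obtain ⟨x1, x2, z, y', e, h3, h4, h5, h6⟩ := ih hl' c hc h2.symm
        exact ⟨a ++ x1, x2, z, y', by simp [h1, e], kstar_append (kstar_single ha) h3, h4, h5, h6⟩

theorem FQ_star (L : Language X) (hL : FQ L) : FQ (L∗) := by
  refine (((hL.finite_subsets).image
    fun p : Set (Language X) => ({y | ∃ Q ∈ p, y ∈ Q * L∗} : Language X)).insert (L∗)).subset ?_
  rintro _ ⟨x, rfl⟩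
  rcases eq_or_ne x [] with rfl | hx
  · exact Or.inl rfl
  refine Or.inr ⟨{Q | ∃ x1 x2, x = x1 ++ x2 ∧ x1 ∈ L∗ ∧ Q = L.leftQuotient x2}, ?_, ?_⟩
  · rintro _ ⟨x1, x2, -, -, rfl⟩
    exact ⟨x2, rfl⟩
  · refine Set.ext fun y => ?_
    change (∃ Q, (∃ x1 x2, x = x1 ++ x2 ∧ x1 ∈ L∗ ∧ Q = L.leftQuotient x2) ∧ y ∈ Q * L∗) ↔ (x ++ y ∈ (L∗))
    constructor
    · rintro ⟨_, ⟨x1, x2, rfl, h1, rfl⟩, h2⟩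
      obtain ⟨a, ha, b, hb, rfl⟩ := Language.mem_mul.1 h2
      have := kstar_append h1 (kstar_append (kstar_single (show x2 ++ a ∈ L from ha)) hb)
      simpa using this
    · intro h
      obtain ⟨l, h, hl⟩ := Language.mem_kstar.1 h
      obtain ⟨x1, x2, z, y', e, h3, h4, h5, h6⟩ := kstar_split L l hl x y hx h
      exact ⟨_, ⟨x1, x2, e, h3, rfl⟩, Language.mem_mul.2 ⟨z, h5, y', h6, h4.symm⟩⟩

theorem FQ_of_reg (L : Language X) (h : IsRegLang L) : FQ L := by
  induction h with
  | finite W h => exact FQ_finite W h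
  | union W V _ _ h1 h2 => exact FQ_add W V h1 h2
  | concat W V _ _ h1 h2 => exact FQ_mul W V h1 h2
  | star W _ h => exact FQ_star W h

def quotClass (M Q : Language X) : Language X := {y | y ≠ [] ∧ M.leftQuotient y = Q}

theorem FQ_quotClass (M Q : Language X) (hM : FQ M) : FQ (quotClass M Q) := by
  refine ((hM.image
    fun P : Language X => ({y | P.leftQuotient y = Q} : Language X)).insert (quotClass M Q)).subset ?_
  rintro _ ⟨x, rfl⟩
  rcases eq_or_ne x [] with rfl | hx
  · exact Or.inl rfl
  refine Or.inr ⟨M.leftQuotient x, ⟨x, rfl⟩, ?_⟩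
  refine Set.ext fun y => ?_
  change (M.leftQuotient x).leftQuotient y = Q ↔ (x ++ y ≠ [] ∧ M.leftQuotient (x ++ y) = Q)
  rw [Language.leftQuotient_append]
  simp [hx]

theorem FQ_quot (M : Language X) (hM : FQ M) (x : List X) : FQ (M.leftQuotient x) := by
  refine hM.subset ?_
  rintro _ ⟨y, rfl⟩
  exact ⟨x ++ y, Language.leftQuotient_append _ _ _⟩

/-- weak Ramsey -/
theorem ramsey {C : Type*} [Finite C] (c : ℕ → ℕ → C) :
    ∃ n : ℕ → ℕ, StrictMono n ∧ ∃ e, ∀ j, c (n j) (n (j+1)) = e := by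
  let U : Ultrafilter ℕ := Filter.hyperfilter ℕ
  have key : ∀ f : ℕ → C, ∃ e, ∀ᶠ k in (U : Filter ℕ), f k = e := by
    intro f
    have h : ∀ᶠ k in (U : Filter ℕ), ∃ e, f k = e := Filter.Eventually.of_forall fun k => ⟨_, rfl⟩
    exact Ultrafilter.eventually_exists_iff.1 h
  have hgt : ∀ m, ∀ᶠ k in (U : Filter ℕ), m < k := by
    intro m
    have h : ∀ᶠ k in Filter.atTop, m < k := Filter.eventually_gt_atTop m
    rw [← Nat.cofinite_eq_atTop] at h
    exact Filter.hyperfilter_le_cofinite h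
  choose d hd using fun m => key (c m)
  obtain ⟨e, he⟩ := key d
  obtain ⟨n0, hn0⟩ := he.exists
  have step : ∀ m, d m = e → ∃ k, m < k ∧ c m k = e ∧ d k = e := by
    intro m hm
    obtain ⟨k, h1, h2, h3⟩ := ((hgt m).and ((hd m).and he)).exists
    exact ⟨k, h1, h2.trans hm, h3⟩
  choose! s h1 h2 h3 using step
  have hall : ∀ j, d (s^[j] n0) = e := by
    intro j
    induction j with
    | zero => exact hn0
    | succ j ih => rw [Function.iterate_succ_apply']; exact h3 _ ih
  refine ⟨fun j => s^[j] n0, strictMono_nat_of_lt_succ fun j => ?_, e, fun j => ?_⟩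
  · simp only [Function.iterate_succ_apply']; exact h1 _ (hall j)
  · simp only [Function.iterate_succ_apply']; exact h2 _ (hall j)

def cong (P : Set (Language X)) (x x' : List X) : Prop :=
  ∀ L ∈ P, L.leftQuotient x = L.leftQuotient x'

theorem cong_append {P : Set (Language X)} (hP : ∀ L ∈ P, ∀ x, L.leftQuotient x ∈ P)
    {x x' y y' : List X} (h : cong P x x') (h' : cong P y y') : cong P (x ++ y) (x' ++ y') := by
  intro L hL
  rw [Language.leftQuotient_append, Language.leftQuotient_append, h L hL, h' _ (hP L hL x')]

theorem cong_mem {P : Set (Language X)} {x x' : List X} (h : cong P x x') {L : Language X}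
    (hL : L ∈ P) (hx : x ∈ L) : x' ∈ L := by
  have : ([] : List X) ∈ L.leftQuotient x := by simpa using hx
  rw [h L hL] at this
  simpa using this

theorem ramsey_word (P : Set (Language X)) (hf : P.Finite)
    (hP : ∀ L ∈ P, ∀ x, L.leftQuotient x ∈ P) (ξ : ℕ → X) :
    ∃ n : ℕ → ℕ, StrictMono n ∧
      ∀ j, cong P (wseg ξ (n 0) (n 1)) (wseg ξ (n j) (n (j+1))) := by
  have : Finite P := hf
  obtain ⟨n, hn, e, he⟩ := ramsey
    (fun a b => (fun L : P => (⟨L.1.leftQuotient (wseg ξ a b), hP _ L.2 _⟩ : P)))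
  refine ⟨n, hn, fun j L hL => ?_⟩
  have h := congrFun ((he 0).trans (he j).symm) ⟨L, hL⟩
  exact congrArg Subtype.val h

def rep (v : List X) (N : ℕ) : List X := (List.replicate N v).flatten

theorem rep_succ (v : List X) (N : ℕ) : rep v (N+1) = rep v N ++ v := by
  simp [rep, List.replicate_succ']

theorem rep_length (v : List X) (hv : v ≠ []) (N : ℕ) : N ≤ (rep v N).length := by
  have := List.length_pos_iff.2 hv
  simp [rep]
  nlinarith

theorem rep_cycle (v : List X) (π : ℕ → X) (hπ : π = wcat v π) (N : ℕ) :
    π = wcat (rep v N) π := by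
  induction N with
  | zero => rfl
  | succ N ih => rw [rep_succ, wcat_append, ← hπ]; exact ih

theorem cong_rep {P : Set (Language X)} (hP : ∀ L ∈ P, ∀ x, L.leftQuotient x ∈ P)
    (ξ : ℕ → X) (n : ℕ → ℕ) (hn : StrictMono n) (v : List X)
    (h : ∀ j, cong P v (wseg ξ (n j) (n (j+1)))) (j N : ℕ) :
    cong P (rep v N) (wseg ξ (n j) (n (j+N))) := by
  induction N with
  | zero =>
    have : wseg ξ (n j) (n (j+0)) = [] := List.length_eq_zero_iff.1 (by simp [wseg_length])
    rw [this]; exact fun L _ => rfl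
  | succ N ih =>
    rw [rep_succ, wseg_append ξ (hn.monotone (show j ≤ j+N by omega))
      (hn.monotone (show j+N ≤ j+(N+1) by omega))]
    exact cong_append hP ih (h _)

theorem step_lemma (R V : Language X) (x v : List X) (hv : v ≠ []) (π : ℕ → X)
    (hπ : π = wcat v π) (h : wcat x π ∈ catOmega R (omegaPow V)) :
    ∃ N y, x ++ rep v N ∈ R * quotClass (V∗) ((V∗).leftQuotient y) ∧
      π ∈ catOmega ((V∗).leftQuotient y) (omegaPow V) := by
  obtain ⟨r, hr, η, hη, e⟩ := h
  have hl := rep_length v hv (r.length + 1)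
  rw [rep_cycle v π hπ (r.length + 1), ← wcat_append] at e
  obtain ⟨y, hy, rfl⟩ := wcat_cancel r _ η π e.symm (by simp; omega)
  have hy0 : y ≠ [] := by
    rintro rfl
    have := congrArg List.length hy
    simp at this; omega
  refine ⟨r.length + 1, y, ?_, ?_⟩
  · rw [hy]
    exact Language.mem_mul.2 ⟨r, hr, y, ⟨hy0, rfl⟩, rfl⟩
  · obtain ⟨s, hs, hn, η', hη', e'⟩ := omegaPow_long V y.length _ hη
    obtain ⟨z, rfl, hz⟩ := wcat_cancel y s π η' e' hn
    exact ⟨z, hs, η', hη', hz⟩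

theorem transfer (W V : Language X) (P : Set (Language X))
    (hP : ∀ L ∈ P, ∀ x, L.leftQuotient x ∈ P)
    (hPW : ∀ y, W * quotClass (V∗) ((V∗).leftQuotient y) ∈ P)
    (hPV : ∀ x y, (V∗).leftQuotient x * quotClass (V∗) ((V∗).leftQuotient y) ∈ P)
    (ξ : ℕ → X) (n : ℕ → ℕ) (hn : StrictMono n) (v : List X) (hv : v ≠ [])
    (h : ∀ j, cong P v (wseg ξ (n j) (n (j+1)))) (π : ℕ → X) (hπ : π = wcat v π)
    (hmem : wcat (wseg ξ 0 (n 0)) π ∈ catOmega W (omegaPow V)) :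
    ξ ∈ catOmega W (omegaPow V) := by
  let S : Set (ℕ → X) := {η | ∃ x ∈ V∗, ∃ y j, y ≠ [] ∧
    π ∈ catOmega ((V∗).leftQuotient y) (omegaPow V) ∧ η = wcat (x ++ y) (wtail (n j) ξ)}
  have hS : S ⊆ omegaPow V := by
    apply omegaPow_coind
    rintro _ ⟨x, hx, y, j, hy0, hy, rfl⟩
    obtain ⟨N, y', h1, h2⟩ := step_lemma _ V [] v hv π hπ hy
    have h3 := cong_mem (cong_rep hP ξ n hn v h j N) (hPV y y') h1
    obtain ⟨r, hr, y'', ⟨hy''0, hy''⟩, e⟩ := Language.mem_mul.1 h3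
    have hk : x ++ (y ++ r) ∈ V∗ := kstar_append hx hr
    obtain ⟨l, hl, hlV⟩ := Language.mem_kstar_iff_exists_nonempty.1 hk
    cases l with
    | nil => simp at hl; exact absurd hl.2.1 hy0
    | cons a l =>
      have ha := hlV a (by simp)
      refine ⟨a, ha.1, ha.2, _, ⟨l.flatten, Language.mem_kstar.2 ⟨l, rfl, fun b hb => (hlV b (by simp [hb])).1⟩,
        y'', j + N, hy''0, hy'' ▸ h2, rfl⟩, ?_⟩
      rw [wseg_cat ξ (hn.monotone (show j ≤ j+N by omega)), ← e, ← wcat_append, ← wcat_append]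
      congr 1
      have : x ++ (y ++ r) ++ y'' = (a :: l).flatten ++ y'' := by rw [hl]
      simpa using this
  obtain ⟨N, y, h1, h2⟩ := step_lemma W V _ v hv π hπ hmem
  have h3 : wseg ξ 0 (n (0+N)) ∈ W * quotClass (V∗) ((V∗).leftQuotient y) := by
    refine cong_mem ?_ (hPW y) h1
    rw [wseg_append ξ (Nat.zero_le (n 0)) (hn.monotone (show 0 ≤ 0+N by omega))]
    exact cong_append hP (fun L _ => rfl) (cong_rep hP ξ n hn v h 0 N)
  obtain ⟨w, hw, y', ⟨hy'0, hy'⟩, e⟩ := Language.mem_mul.1 h3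
  refine ⟨w, hw, wcat y' (wtail (n (0+N)) ξ), hS ⟨[], Language.nil_mem_kstar V, y', 0+N, hy'0,
    hy' ▸ h2, rfl⟩, ?_⟩
  rw [← wcat_append, e, ← wseg_cat ξ (Nat.zero_le _)]; rfl

theorem reg_univ (F : Set (ℕ → X)) (hF : IsRegOmega F) (hU : ∀ ξ, UltPeriodic ξ → ξ ∈ F)
    (ξ : ℕ → X) : ξ ∈ F := by
  obtain ⟨k, W, V, hWV, rfl⟩ := hF
  have hVF : ∀ i, FQ ((V i)∗) := fun i => FQ_star _ (FQ_of_reg _ (hWV i).2)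
  let B : Set (Language X) := ⋃ i, ((⋃ Q ∈ Set.range ((V i)∗).leftQuotient,
    {W i * quotClass ((V i)∗) Q}) ∪ ⋃ R ∈ Set.range ((V i)∗).leftQuotient,
      ⋃ Q ∈ Set.range ((V i)∗).leftQuotient, {R * quotClass ((V i)∗) Q})
  have hBf : B.Finite := by
    refine Set.finite_iUnion fun i => Set.Finite.union ?_ ?_
    · exact (hVF i).biUnion fun _ _ => Set.finite_singleton _
    · exact (hVF i).biUnion fun _ _ => (hVF i).biUnion fun _ _ => Set.finite_singleton _
  have hB : ∀ L ∈ B, FQ L := by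
    intro L hL
    simp only [B, Set.mem_iUnion, Set.mem_union, Set.mem_singleton_iff] at hL
    obtain ⟨i, ⟨Q, -, rfl⟩ | ⟨_, ⟨x, rfl⟩, Q, -, rfl⟩⟩ := hL
    · exact FQ_mul _ _ (FQ_of_reg _ (hWV i).1) (FQ_quotClass _ _ (hVF i))
    · exact FQ_mul _ _ (FQ_quot _ (hVF i) _) (FQ_quotClass _ _ (hVF i))
  let P : Set (Language X) := ⋃ L ∈ B, Set.range L.leftQuotient
  have hBP : ∀ L ∈ B, L ∈ P := fun L hL => Set.mem_biUnion hL ⟨[], rfl⟩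
  have hPf : P.Finite := hBf.biUnion hB
  have hP : ∀ L ∈ P, ∀ x, L.leftQuotient x ∈ P := by
    intro L hL x
    simp only [P, Set.mem_iUnion] at hL ⊢
    obtain ⟨L', h', y, rfl⟩ := hL
    exact ⟨L', h', y ++ x, Language.leftQuotient_append _ _ _⟩
  obtain ⟨n, hn, hc⟩ := ramsey_word P hPf hP ξ
  have hv : wseg ξ (n 0) (n 1) ≠ [] := by
    rw [← List.length_pos_iff, wseg_length]
    have := hn (show 0 < 1 by omega)
    omega
  have hz := hU _ ⟨wseg ξ 0 (n 0), _, hv, rfl⟩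
  simp only [Set.mem_iUnion] at hz ⊢
  obtain ⟨i, hi⟩ := hz
  refine ⟨i, transfer (W i) (V i) P hP (fun y => hBP _ ?_) (fun x y => hBP _ ?_) ξ n hn _ hv hc _
    (Stream'.cycle_eq _ hv) hi⟩
  · simp only [B, Set.mem_iUnion, Set.mem_union, Set.mem_singleton_iff]
    exact ⟨i, Or.inl ⟨_, ⟨y, rfl⟩, rfl⟩⟩
  · simp only [B, Set.mem_iUnion, Set.mem_union, Set.mem_singleton_iff]
    exact ⟨i, Or.inr ⟨_, ⟨x, rfl⟩, _, ⟨y, rfl⟩, rfl⟩⟩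

theorem wcat_lt (w : List X) (ξ : ℕ → X) (i : ℕ) (h : i < w.length) : wcat w ξ i = w[i] :=
  Stream'.get_append_left i w ξ h

theorem mem_cyl_iff (w : List X) (ξ : ℕ → X) :
    ξ ∈ cyl w ↔ ∀ i : Fin w.length, ξ i = w[i] := by
  constructor
  · rintro ⟨η, rfl⟩ i
    exact wcat_lt w η i i.2
  · intro h
    refine ⟨wtail w.length ξ, ?_⟩
    have e := wseg_cat ξ (Nat.zero_le w.length)
    rw [wtail_zero] at e
    have : wseg ξ 0 w.length = w := by
      refine List.ext_getElem (by simp [wseg_length]) fun i h1 h2 => ?_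
      have h3 : ξ i = w[i] := h ⟨i, h2⟩
      rw [← h3, ← wcat_lt _ (wtail w.length ξ) i h1, ← e]
    rw [this] at e; exact e

theorem isOpen_cyl (w : List X) : @IsOpen _ (cantorTop X) (cyl w) := by
  letI : TopologicalSpace X := ⊥
  haveI : DiscreteTopology X := ⟨rfl⟩
  change IsOpen (cyl w)
  have : cyl w = ⋂ i : Fin w.length, (fun ξ : ℕ → X => ξ i) ⁻¹' {w[i]} := by
    ext ξ; simp only [mem_cyl_iff, Set.mem_iInter]; rfl
  rw [this]
  exact isOpen_iInter_of_finite fun i => (isOpen_discrete _).preimage (continuous_apply _)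

theorem isOpen_infixOcc (w : List X) : @IsOpen _ (cantorTop X) (infixOcc w) := by
  have : infixOcc w = ⋃ u, cyl (u ++ w) := by ext; simp [infixOcc]
  rw [this]
  exact @isOpen_iUnion _ _ (cantorTop X) _ fun u => isOpen_cyl _

theorem dense_infixOcc (w : List X) : @Dense _ (cantorTop X) (infixOcc w) := by
  letI : TopologicalSpace X := ⊥
  haveI : DiscreteTopology X := ⟨rfl⟩
  change Dense (infixOcc w)
  rw [dense_iff_inter_open]
  rintro U hU ⟨ξ, hξ⟩
  obtain ⟨I, u, h1, h2⟩ := isOpen_pi_iff.1 hU ξ hξ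
  let N := I.sup id + 1
  refine ⟨wcat (wseg ξ 0 N ++ w) ξ, h2 ?_, wseg ξ 0 N, ξ, rfl⟩
  intro i hi
  have hiN : i < N := Nat.lt_succ_of_le (Finset.le_sup (f := id) hi)
  have hlen : i < (wseg ξ 0 N).length := by simpa [wseg_length] using hiN
  have e : wcat (wseg ξ 0 N ++ w) ξ i = ξ i := by
    have e' := wseg_cat ξ (Nat.zero_le N)
    rw [wtail_zero] at e'
    conv_rhs => rw [e']
    rw [wcat_append, wcat_lt _ _ _ hlen, wcat_lt _ _ _ hlen]
  rw [e]
  exact (h1 i hi).2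

theorem meagre_R0 [Finite X] :
    @IsMeagre _ (cantorTop X) (⋃ w : List X, (infixOcc w)ᶜ) := by
  letI : TopologicalSpace (ℕ → X) := cantorTop X
  refine isMeagre_iUnion fun w => ?_
  rw [IsMeagre, compl_compl]
  exact residual_of_dense_open (isOpen_infixOcc w) (dense_infixOcc w)

theorem not_meagre [Finite X] (U : Set (ℕ → X)) (hU : @IsOpen _ (cantorTop X) U)
    (hne : U.Nonempty) : ¬ @IsMeagre _ (cantorTop X) U := by
  letI : TopologicalSpace X := ⊥
  haveI : DiscreteTopology X := ⟨rfl⟩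
  have hb : BaireSpace (ℕ → X) := inferInstance
  exact @not_isMeagre_of_isOpen _ (cantorTop X) hb U hU hne

theorem stmt14 {X : Type} [Fintype X] (hX : 2 ≤ Fintype.card X)
    (F : Set (ℕ → X)) (hUlt : ∀ ξ : ℕ → X, UltPeriodic ξ → ξ ∈ F)
    (hR0 : F ⊆ ⋃ w : List X, (infixOcc w)ᶜ) :
    ¬ HasABP F := by
  rintro ⟨E, F', -, hEo, hFr, hFm, hsub⟩
  have hEsub : E ⊆ (⋃ w : List X, (infixOcc w)ᶜ) ∪ F' := by
    intro ξ hξ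
    by_cases h : ξ ∈ F
    · exact Or.inl (hR0 h)
    · exact Or.inr (hsub (Or.inr ⟨hξ, h⟩))
  have hEm : @IsMeagre _ (cantorTop X) E :=
    @IsMeagre.mono _ (cantorTop X) _ _ hEsub
      (@IsMeagre.union _ (cantorTop X) _ _ meagre_R0 hFm)
  have hE : ∀ ξ, ξ ∉ E := fun ξ hξ => not_meagre E hEo ⟨ξ, hξ⟩ hEm
  have hFF : ∀ ξ, ξ ∈ F' :=
    reg_univ F' hFr fun ξ hξ => hsub (Or.inl ⟨hUlt ξ hξ, hE ξ⟩)
  have hx : 0 < Fintype.card X := by omega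
  obtain ⟨x⟩ := Fintype.card_pos_iff.1 hx
  have hu : F' = Set.univ := Set.eq_univ_of_forall hFF
  refine not_meagre F' ?_ ⟨fun _ => x, hFF _⟩ hFm
  rw [hu]
  exact @isOpen_univ _ (cantorTop X)

end AutoBaire
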